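/- There exists a constant c > 0 such that: (a) c‖u‖² ≤ ‖Tu‖² + ‖T*u‖² for all u ∈ Dom T ∩ Dom T* ∩ R(Q), and (b) c‖u‖ ≤ ‖Qu‖ for all u ∈ Dom Q ∩ R(Q). -/

import Mathlib

open scoped LinearPMap

/-- `T'` is the restriction of the partially defined operator `T` to the subspaces `V` (source)
and `W` (target): the domain of `T'` consists exactly of the elements of `V` lying in the domain
of `T`, and the values of `T'` agree with those of `T` (in particular `T` maps `Dom T ∩ V`
into `W`). -/
def IsRestrictionOf {R E : Type*} [Ring R] [AddCommGroup E] [Module R E]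
    (T : E →ₗ.[R] E) (V W : Submodule R E) (T' : ↥V →ₗ.[R] ↥W) : Prop :=
  (∀ u : V, u ∈ T'.domain ↔ (u : E) ∈ T.domain) ∧
  ∀ (u : V) (hu : u ∈ T'.domain) (hu' : (u : E) ∈ T.domain),
    ((T' ⟨u, hu⟩ : W) : E) = T ⟨(u : E), hu'⟩

/-!
Let `A` and `B` be the restrictions of `T` to `V₁` and `V₂`, with formal adjoints `A'` and `B'`, so
that `BA = 0` and `Q = B'B + AA'`. Split `u = Q v` as `u = b + a` with `b = B' (B v)` and
`a = A (A' v)`. Since `BA = 0`, the two parts are orthogonal. By the open mapping theorem a closed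
operator with closed range has preimages `A w = a` with `‖w‖ ≤ C ‖a‖`. Then
`‖a‖² = ⟪A w, u⟫ = ⟪w, A' u⟫` gives `‖a‖ ≤ C ‖A' u‖`. Dually `B u = B b`, and `B w = B b` with
`‖w‖ ≤ C ‖B u‖` gives `‖b‖² = ⟪B w, B v⟫ = ⟪w, b⟫`, hence `‖b‖ ≤ C ‖B u‖`. This proves (a) by
Pythagoras, and (b) follows from (a) because `‖B u‖² + ‖A' u‖² = re ⟪Q u, u⟫ ≤ ‖Q u‖ ‖u‖`.
-/

theorem le_of_sq_le_mul {s t : ℝ} (hs : 0 ≤ s) (h : t ^ 2 ≤ s * t) : t ≤ s := by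
  by_contra! hst
  nlinarith

section ClosedRange

variable {𝕜 E F : Type*} [NontriviallyNormedField 𝕜] [NormedAddCommGroup E] [NormedSpace 𝕜 E]
  [NormedAddCommGroup F] [NormedSpace 𝕜 F]

/-- Every element `y` of the range of `A` has a preimage of norm at most `C * ‖y‖`. This is the
quantitative form of the range of a closed operator being closed. -/
def HasPreimageBound (A : E →ₗ.[𝕜] F) (C : ℝ) : Prop :=
  ∀ x : A.domain, ∃ w : A.domain, A w = A x ∧ ‖(w : E)‖ ≤ C * ‖A x‖

theorem HasPreimageBound.mono {A : E →ₗ.[𝕜] F} {C D : ℝ} (h : HasPreimageBound A C)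
    (hCD : C ≤ D) : HasPreimageBound A D := fun x ↦
  let ⟨w, hw, hwC⟩ := h x
  ⟨w, hw, hwC.trans (by gcongr)⟩

theorem exists_hasPreimageBound_of_isClosed_range [CompleteSpace E] [CompleteSpace F]
    {A : E →ₗ.[𝕜] F} (hA : A.IsClosed)
    (hR : IsClosed ((LinearMap.range A.toFun : Submodule 𝕜 F) : Set F)) :
    ∃ C > 0, HasPreimageBound A C := by
  have : CompleteSpace A.graph := IsClosed.completeSpace_coe (hs := hA)
  have : CompleteSpace (LinearMap.range A.toFun) := hR.completeSpace_coe
  have snd_mem_range (p : A.graph) : (p : E × F).2 ∈ LinearMap.range A.toFun :=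
    A.graph_map_snd_eq_range ▸ Submodule.mem_map_of_mem p.2
  let sndGraph : A.graph →L[𝕜] LinearMap.range A.toFun :=
    ((ContinuousLinearMap.snd 𝕜 E F).comp A.graph.subtypeL).codRestrict _ snd_mem_range
  have sndGraph_surjective : Function.Surjective sndGraph := by
    rintro ⟨_, x, rfl⟩
    exact ⟨⟨(x, A x), A.mem_graph x⟩, rfl⟩
  obtain ⟨C, hC, hbound⟩ := sndGraph.exists_preimage_norm_le sndGraph_surjective
  refine ⟨C, hC, fun x ↦ ?_⟩
  obtain ⟨⟨p, hp⟩, hpx, hpC⟩ := hbound ⟨A x, x, rfl⟩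
  obtain ⟨w, hwp, hAw⟩ := A.mem_graph_iff.1 hp
  exact ⟨w, hAw.trans (congrArg Subtype.val hpx), hwp ▸ (norm_fst_le p).trans hpC⟩

end ClosedRange

section HodgeLaplacian

variable {R E F G : Type*} [Ring R] [AddCommGroup E] [Module R E] [AddCommGroup F] [Module R F]
  [AddCommGroup G] [Module R G]

/-- The partially defined operators `A` and `B` form a complex `E ⇀ F ⇀ G`: the range of `A` lies
in the domain of `B`, and `BA = 0`. -/
def IsComplexPair (A : E →ₗ.[R] F) (B : F →ₗ.[R] G) : Prop :=
  ∀ x : A.domain, ∃ h : A x ∈ B.domain, B ⟨A x, h⟩ = 0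

/-- `L` is the operator `B'B + AA'` on its natural domain. For a complex `A`, `B` of operators
between Hilbert spaces with adjoints `A'`, `B'` it is the Hodge Laplacian in the middle degree. -/
structure IsHodgeLaplacian (A : E →ₗ.[R] F) (A' : F →ₗ.[R] E) (B : F →ₗ.[R] G) (B' : G →ₗ.[R] F)
    (L : F →ₗ.[R] F) : Prop where
  mem_domain_iff : ∀ x, x ∈ L.domain ↔ ∃ (hB : x ∈ B.domain) (hA' : x ∈ A'.domain),
    B ⟨x, hB⟩ ∈ B'.domain ∧ A' ⟨x, hA'⟩ ∈ A.domain
  apply_eq : ∀ x (hx : x ∈ L.domain) (hB : x ∈ B.domain) (hA' : x ∈ A'.domain)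
    (hB' : B ⟨x, hB⟩ ∈ B'.domain) (hA : A' ⟨x, hA'⟩ ∈ A.domain),
    L ⟨x, hx⟩ = B' ⟨B ⟨x, hB⟩, hB'⟩ + A ⟨A' ⟨x, hA'⟩, hA⟩

end HodgeLaplacian

section Estimates

open scoped InnerProductSpace

variable {𝕜 E F G : Type*} [RCLike 𝕜] [NormedAddCommGroup E] [InnerProductSpace 𝕜 E]
  [NormedAddCommGroup F] [InnerProductSpace 𝕜 F] [NormedAddCommGroup G] [InnerProductSpace 𝕜 G]
  {A : E →ₗ.[𝕜] F} {A' : F →ₗ.[𝕜] E} {B : F →ₗ.[𝕜] G} {B' : G →ₗ.[𝕜] F} {L : F →ₗ.[𝕜] F} {C : ℝ}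

theorem IsComplexPair.inner_apply_eq_zero (hAB : IsComplexPair A B) (hB : B.IsFormalAdjoint B')
    (x : A.domain) (y : B'.domain) : ⟪A x, B' y⟫_𝕜 = 0 := by
  obtain ⟨hAx, hBAx⟩ := hAB x
  rw [← hB ⟨A x, hAx⟩ y, hBAx, inner_zero_left]

theorem HasPreimageBound.norm_apply_le (hAC : HasPreimageBound A C) (hC : 0 ≤ C)
    (hA : A.IsFormalAdjoint A') (x : A.domain) (u : A'.domain)
    (hxu : ∀ w : A.domain, ⟪A w, (u : F)⟫_𝕜 = ⟪A w, A x⟫_𝕜) : ‖A x‖ ≤ C * ‖A' u‖ := by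
  obtain ⟨w, hwx, hwC⟩ := hAC x
  have inner_eq : ⟪A x, A x⟫_𝕜 = ⟪(w : E), A' u⟫_𝕜 := by rw [← hA w u, hxu w, hwx]
  refine le_of_sq_le_mul (by positivity) ?_
  calc ‖A x‖ ^ 2 = RCLike.re ⟪(w : E), A' u⟫_𝕜 := by rw [← inner_eq, inner_self_eq_norm_sq]
    _ ≤ ‖(w : E)‖ * ‖A' u‖ := re_inner_le_norm _ _
    _ ≤ C * ‖A x‖ * ‖A' u‖ := by gcongr
    _ = C * ‖A' u‖ * ‖A x‖ := by ring

theorem HasPreimageBound.norm_formalAdjoint_apply_le (hBC : HasPreimageBound B C)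
    (hB : B.IsFormalAdjoint B') (y : B'.domain) (hy : B' y ∈ B.domain) :
    ‖B' y‖ ≤ C * ‖B ⟨B' y, hy⟩‖ := by
  obtain ⟨w, hwy, hwC⟩ := hBC ⟨B' y, hy⟩
  have inner_eq : ⟪B' y, B' y⟫_𝕜 = ⟪(w : F), B' y⟫_𝕜 := by rw [← hB w y, hwy, ← hB ⟨B' y, hy⟩ y]
  refine (le_of_sq_le_mul (norm_nonneg _) ?_).trans hwC
  rw [← inner_self_eq_norm_sq (𝕜 := 𝕜), inner_eq]
  exact re_inner_le_norm _ _

theorem IsComplexPair.norm_sq_le_of_eq_add (hAB : IsComplexPair A B) (hA : A.IsFormalAdjoint A')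
    (hB : B.IsFormalAdjoint B') (hC : 0 ≤ C) (hAC : HasPreimageBound A C)
    (hBC : HasPreimageBound B C) {u : F} (huB : u ∈ B.domain) (huA : u ∈ A'.domain)
    {y : B'.domain} {x : A.domain} (hu : u = B' y + A x) :
    ‖u‖ ^ 2 ≤ C ^ 2 * (‖B ⟨u, huB⟩‖ ^ 2 + ‖A' ⟨u, huA⟩‖ ^ 2) := by
  have orthogonal (w : A.domain) : ⟪A w, B' y⟫_𝕜 = 0 := hAB.inner_apply_eq_zero hB w y
  have norm_A_le : ‖A x‖ ≤ C * ‖A' ⟨u, huA⟩‖ :=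
    hAC.norm_apply_le hC hA x ⟨u, huA⟩ fun w ↦ by
      simp only [hu, inner_add_right, orthogonal, zero_add]
  obtain ⟨hAx, hBAx⟩ := hAB x
  have hy : B' y ∈ B.domain := by
    rw [eq_sub_of_add_eq hu.symm]
    exact B.domain.sub_mem huB hAx
  have B_u_eq : B ⟨u, huB⟩ = B ⟨B' y, hy⟩ := by
    rw [show (⟨u, huB⟩ : B.domain) = ⟨B' y, hy⟩ + ⟨A x, hAx⟩ from Subtype.ext hu,
      B.map_add, hBAx, add_zero]
  have norm_B'_le : ‖B' y‖ ≤ C * ‖B ⟨u, huB⟩‖ :=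
    B_u_eq ▸ hBC.norm_formalAdjoint_apply_le hB y hy
  calc ‖u‖ ^ 2 = ‖B' y‖ ^ 2 + ‖A x‖ ^ 2 := by
        simpa only [hu, sq] using norm_add_sq_eq_norm_sq_add_norm_sq_of_inner_eq_zero (𝕜 := 𝕜)
          (B' y) (A x) (inner_eq_zero_symm.1 (orthogonal x))
    _ ≤ (C * ‖B ⟨u, huB⟩‖) ^ 2 + (C * ‖A' ⟨u, huA⟩‖) ^ 2 := by gcongr
    _ = C ^ 2 * (‖B ⟨u, huB⟩‖ ^ 2 + ‖A' ⟨u, huA⟩‖ ^ 2) := by ring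

namespace IsHodgeLaplacian

theorem norm_sq_le_of_mem_range (hL : IsHodgeLaplacian A A' B B' L) (hAB : IsComplexPair A B)
    (hA : A.IsFormalAdjoint A') (hB : B.IsFormalAdjoint B') (hC : 0 ≤ C)
    (hAC : HasPreimageBound A C) (hBC : HasPreimageBound B C) {u : F} (huB : u ∈ B.domain)
    (huA : u ∈ A'.domain) (hu : u ∈ LinearMap.range L.toFun) :
    ‖u‖ ^ 2 ≤ C ^ 2 * (‖B ⟨u, huB⟩‖ ^ 2 + ‖A' ⟨u, huA⟩‖ ^ 2) := by
  obtain ⟨⟨v, hv⟩, rfl⟩ := hu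
  obtain ⟨hvB, hvA', hvB', hvA⟩ := (hL.mem_domain_iff v).1 hv
  exact hAB.norm_sq_le_of_eq_add hA hB hC hAC hBC huB huA
    (hL.apply_eq v hv hvB hvA' hvB' hvA)

theorem re_inner_apply_self (hL : IsHodgeLaplacian A A' B B' L) (hA : A.IsFormalAdjoint A')
    (hB : B.IsFormalAdjoint B') {u : F} (hu : u ∈ L.domain) (huB : u ∈ B.domain)
    (huA : u ∈ A'.domain) :
    RCLike.re ⟪L ⟨u, hu⟩, u⟫_𝕜 = ‖B ⟨u, huB⟩‖ ^ 2 + ‖A' ⟨u, huA⟩‖ ^ 2 := by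
  obtain ⟨_, _, hB', hA'⟩ := (hL.mem_domain_iff u).1 hu
  rw [hL.apply_eq u hu huB huA hB' hA', inner_add_left, map_add,
    hB.symm ⟨_, hB'⟩ ⟨u, huB⟩, hA ⟨_, hA'⟩ ⟨u, huA⟩, inner_self_eq_norm_sq, inner_self_eq_norm_sq]

theorem norm_le_of_mem_range (hL : IsHodgeLaplacian A A' B B' L) (hAB : IsComplexPair A B)
    (hA : A.IsFormalAdjoint A') (hB : B.IsFormalAdjoint B') (hC : 0 ≤ C)
    (hAC : HasPreimageBound A C) (hBC : HasPreimageBound B C) {u : F} (hu : u ∈ L.domain)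
    (hur : u ∈ LinearMap.range L.toFun) : ‖u‖ ≤ C ^ 2 * ‖L ⟨u, hu⟩‖ := by
  obtain ⟨huB, huA, -, -⟩ := (hL.mem_domain_iff u).1 hu
  refine le_of_sq_le_mul (by positivity) ?_
  calc ‖u‖ ^ 2 ≤ C ^ 2 * (‖B ⟨u, huB⟩‖ ^ 2 + ‖A' ⟨u, huA⟩‖ ^ 2) :=
        hL.norm_sq_le_of_mem_range hAB hA hB hC hAC hBC huB huA hur
    _ = C ^ 2 * RCLike.re ⟪L ⟨u, hu⟩, u⟫_𝕜 := by rw [hL.re_inner_apply_self hA hB hu huB huA]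
    _ ≤ C ^ 2 * (‖L ⟨u, hu⟩‖ * ‖u‖) := by gcongr; exact re_inner_le_norm _ _
    _ = C ^ 2 * ‖L ⟨u, hu⟩‖ * ‖u‖ := by ring

end IsHodgeLaplacian

end Estimates

namespace IsRestrictionOf

section Algebra

variable {R E : Type*} [Ring R] [AddCommGroup E] [Module R E] {T S P : E →ₗ.[R] E}
  {V W V₁ V₂ V₃ : Submodule R E} {T' : V →ₗ.[R] W} {T₁ : V₁ →ₗ.[R] V₂} {T₂ : V₂ →ₗ.[R] V₃}
  {S₂ : V₂ →ₗ.[R] V₁} {S₃ : V₃ →ₗ.[R] V₂} {Q : V₂ →ₗ.[R] V₂}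

theorem mem_domain_iff (h : IsRestrictionOf T V W T') {x : V} :
    x ∈ T'.domain ↔ (x : E) ∈ T.domain :=
  h.1 x

theorem coe_apply (h : IsRestrictionOf T V W T') {x : V} (hx' : x ∈ T'.domain)
    (hx : (x : E) ∈ T.domain) : (T' ⟨x, hx'⟩ : E) = T ⟨x, hx⟩ :=
  h.2 x hx' hx

theorem mem_graph_iff (h : IsRestrictionOf T V W T') {p : V × W} :
    p ∈ T'.graph ↔ ((p.1 : E), (p.2 : E)) ∈ T.graph := by
  obtain ⟨x, y⟩ := p
  constructor
  · intro hxy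
    obtain ⟨⟨_, hx'⟩, rfl, rfl⟩ := T'.mem_graph_iff.1 hxy
    rw [h.coe_apply hx' (h.mem_domain_iff.1 hx')]
    exact T.mem_graph ⟨_, h.mem_domain_iff.1 hx'⟩
  · intro hxy
    obtain ⟨⟨_, hx⟩, rfl, hTx⟩ := T.mem_graph_iff.1 hxy
    exact T'.mem_graph_iff.2 ⟨⟨x, h.mem_domain_iff.2 hx⟩, rfl,
      Subtype.ext ((h.coe_apply _ hx).trans hTx)⟩

theorem isComplexPair (hT₁ : IsRestrictionOf T V₁ V₂ T₁) (hT₂ : IsRestrictionOf T V₂ V₃ T₂)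
    (hTT : IsComplexPair T T) : IsComplexPair T₁ T₂ := by
  rintro ⟨x, hx'⟩
  have hx := hT₁.mem_domain_iff.1 hx'
  obtain ⟨hTx, hTTx⟩ := hTT ⟨x, hx⟩
  simp only [← hT₁.coe_apply hx' hx] at hTx hTTx
  exact ⟨hT₂.mem_domain_iff.2 hTx, Subtype.ext ((hT₂.coe_apply _ hTx).trans hTTx)⟩

theorem isHodgeLaplacian (hT₁ : IsRestrictionOf T V₁ V₂ T₁) (hS₂ : IsRestrictionOf S V₂ V₁ S₂)
    (hT₂ : IsRestrictionOf T V₂ V₃ T₂) (hS₃ : IsRestrictionOf S V₃ V₂ S₃)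
    (hQ : IsRestrictionOf P V₂ V₂ Q) (hP : IsHodgeLaplacian T S T S P) :
    IsHodgeLaplacian T₁ S₂ T₂ S₃ Q where
  mem_domain_iff x := by
    rw [hQ.mem_domain_iff, hP.mem_domain_iff]
    constructor
    · rintro ⟨hT, hS, hST, hTS⟩
      rw [← hT₂.coe_apply (hT₂.mem_domain_iff.2 hT) hT] at hST
      rw [← hS₂.coe_apply (hS₂.mem_domain_iff.2 hS) hS] at hTS
      exact ⟨_, _, hS₃.mem_domain_iff.2 hST, hT₁.mem_domain_iff.2 hTS⟩
    · rintro ⟨hT', hS', hST', hTS'⟩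
      have hST := hS₃.mem_domain_iff.1 hST'
      have hTS := hT₁.mem_domain_iff.1 hTS'
      rw [hT₂.coe_apply hT' (hT₂.mem_domain_iff.1 hT')] at hST
      rw [hS₂.coe_apply hS' (hS₂.mem_domain_iff.1 hS')] at hTS
      exact ⟨_, _, hST, hTS⟩
  apply_eq x hx hT' hS' hST' hTS' := by
    obtain ⟨hT, hS, hST, hTS⟩ := (hP.mem_domain_iff x).1 (hQ.mem_domain_iff.1 hx)
    ext
    rw [hQ.coe_apply hx (hQ.mem_domain_iff.1 hx), hP.apply_eq x _ hT hS hST hTS, Submodule.coe_add,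
      hS₃.coe_apply hST' (hS₃.mem_domain_iff.1 hST'),
      hT₁.coe_apply hTS' (hT₁.mem_domain_iff.1 hTS')]
    simp only [hT₂.coe_apply hT' hT, hS₂.coe_apply hS' hS]

end Algebra

theorem isClosed {R E : Type*} [CommRing R] [AddCommGroup E] [Module R E] [TopologicalSpace E]
    {T : E →ₗ.[R] E} {V W : Submodule R E} {T' : V →ₗ.[R] W} (h : IsRestrictionOf T V W T')
    (hT : T.IsClosed) : T'.IsClosed := by
  have graph_eq : (T'.graph : Set (V × W)) = Prod.map (↑) (↑) ⁻¹' (T.graph : Set (E × E)) :=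
    Set.ext fun _ ↦ h.mem_graph_iff
  rw [LinearPMap.IsClosed, graph_eq]
  exact IsClosed.preimage (by fun_prop) hT

theorem isFormalAdjoint {𝕜 E : Type*} [RCLike 𝕜] [NormedAddCommGroup E] [InnerProductSpace 𝕜 E]
    {T S : E →ₗ.[𝕜] E} {V W : Submodule 𝕜 E} {T' : V →ₗ.[𝕜] W} {S' : W →ₗ.[𝕜] V}
    (hT : IsRestrictionOf T V W T') (hS : IsRestrictionOf S W V S') (hTS : T.IsFormalAdjoint S) :
    T'.IsFormalAdjoint S' := by
  rintro ⟨x, hx⟩ ⟨y, hy⟩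
  rw [Submodule.coe_inner, Submodule.coe_inner, hT.coe_apply hx (hT.mem_domain_iff.1 hx),
    hS.coe_apply hy (hS.mem_domain_iff.1 hy)]
  exact hTS ⟨x, _⟩ ⟨y, _⟩

end IsRestrictionOf

theorem stmt_7_general {𝕜 H : Type*} [RCLike 𝕜] [NormedAddCommGroup H] [InnerProductSpace 𝕜 H]
    {T S P : H →ₗ.[𝕜] H} (hTc : T.IsClosed) (hTT : IsComplexPair T T) (hTS : T.IsFormalAdjoint S)
    (hP : IsHodgeLaplacian T S T S P) {V₁ V₂ V₃ : Submodule 𝕜 H}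
    [CompleteSpace V₁] [CompleteSpace V₂] [CompleteSpace V₃]
    {T₁ : V₁ →ₗ.[𝕜] V₂} (hT₁ : IsRestrictionOf T V₁ V₂ T₁)
    {T₂ : V₂ →ₗ.[𝕜] V₃} (hT₂ : IsRestrictionOf T V₂ V₃ T₂)
    (hR₁ : IsClosed ((LinearMap.range T₁.toFun : Submodule 𝕜 V₂) : Set V₂))
    (hR₂ : IsClosed ((LinearMap.range T₂.toFun : Submodule 𝕜 V₃) : Set V₃))
    {S₂ : V₂ →ₗ.[𝕜] V₁} (hS₂ : IsRestrictionOf S V₂ V₁ S₂)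
    {S₃ : V₃ →ₗ.[𝕜] V₂} (hS₃ : IsRestrictionOf S V₃ V₂ S₃)
    {Q : V₂ →ₗ.[𝕜] V₂} (hQ : IsRestrictionOf P V₂ V₂ Q) :
    ∃ c : ℝ, 0 < c ∧
      (∀ (u : V₂) (h1 : (u : H) ∈ T.domain) (h2 : (u : H) ∈ S.domain),
        u ∈ LinearMap.range Q.toFun →
          c * ‖(u : H)‖ ^ 2 ≤ ‖T ⟨(u : H), h1⟩‖ ^ 2 + ‖S ⟨(u : H), h2⟩‖ ^ 2) ∧
      (∀ (u : V₂) (hu : u ∈ Q.domain), u ∈ LinearMap.range Q.toFun →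
        c * ‖u‖ ≤ ‖Q ⟨u, hu⟩‖) := by
  obtain ⟨C₁, hC₁, hT₁C⟩ := exists_hasPreimageBound_of_isClosed_range (hT₁.isClosed hTc) hR₁
  obtain ⟨C₂, -, hT₂C⟩ := exists_hasPreimageBound_of_isClosed_range (hT₂.isClosed hTc) hR₂
  obtain ⟨C, hC, hAC, hBC⟩ : ∃ C > 0, HasPreimageBound T₁ C ∧ HasPreimageBound T₂ C :=
    ⟨max C₁ C₂, lt_max_of_lt_left hC₁, hT₁C.mono (le_max_left _ _), hT₂C.mono (le_max_right _ _)⟩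
  have hAB : IsComplexPair T₁ T₂ := hT₁.isComplexPair hT₂ hTT
  have hA : T₁.IsFormalAdjoint S₂ := hT₁.isFormalAdjoint hS₂ hTS
  have hB : T₂.IsFormalAdjoint S₃ := hT₂.isFormalAdjoint hS₃ hTS
  have hL : IsHodgeLaplacian T₁ S₂ T₂ S₃ Q := hT₁.isHodgeLaplacian hS₂ hT₂ hS₃ hQ hP
  refine ⟨(C ^ 2)⁻¹, by positivity, fun u huT huS hu ↦ ?_, fun u huQ hu ↦ ?_⟩
  · rw [inv_mul_le_iff₀ (by positivity), ← hT₂.coe_apply (hT₂.mem_domain_iff.2 huT) huT,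
      ← hS₂.coe_apply (hS₂.mem_domain_iff.2 huS) huS]
    exact hL.norm_sq_le_of_mem_range hAB hA hB hC.le hAC hBC _ _ hu
  · rw [inv_mul_le_iff₀ (by positivity)]
    exact hL.norm_le_of_mem_range hAB hA hB hC.le hAC hBC huQ hu

theorem stmt_7 {H : Type*} [NormedAddCommGroup H] [InnerProductSpace ℂ H] [CompleteSpace H]
    -- `T` is closed and densely defined, with range contained in `Dom T` and `T² = 0`
    (T : H →ₗ.[ℂ] H) (hTd : Dense (T.domain : Set H)) (hTc : T.IsClosed)
    (hTr : ∀ u : T.domain, T u ∈ T.domain)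
    (hT2 : ∀ u : T.domain, T ⟨T u, hTr u⟩ = 0)
    -- `P = T*T + TT*` with its natural domain; `P` is self-adjoint
    (P : H →ₗ.[ℂ] H)
    (hPdom : ∀ x : H, x ∈ P.domain ↔
      ∃ (h1 : x ∈ T.domain) (h2 : x ∈ (T†).domain),
        T ⟨x, h1⟩ ∈ (T†).domain ∧ T† ⟨x, h2⟩ ∈ T.domain)
    (hPval : ∀ (x : H) (hx : x ∈ P.domain) (h1 : x ∈ T.domain) (h2 : x ∈ (T†).domain)
      (h3 : T ⟨x, h1⟩ ∈ (T†).domain) (h4 : T† ⟨x, h2⟩ ∈ T.domain),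
      P ⟨x, hx⟩ = T† ⟨T ⟨x, h1⟩, h3⟩ + T ⟨T† ⟨x, h2⟩, h4⟩)
    (hPsa : IsSelfAdjoint P)
    -- the closed subspaces `V₁, V₂, V₃`
    (V₁ V₂ V₃ : Submodule ℂ H)
    (hV₁ : IsClosed (V₁ : Set H)) (hV₂ : IsClosed (V₂ : Set H)) (hV₃ : IsClosed (V₃ : Set H))
    [CompleteSpace V₁] [CompleteSpace V₂] [CompleteSpace V₃]
    -- `T₁ = T|_{V₁} : V₁ ⇀ V₂` and `T₂ = T|_{V₂} : V₂ ⇀ V₃`, densely defined with closed range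
    (T₁ : ↥V₁ →ₗ.[ℂ] ↥V₂) (hT₁ : IsRestrictionOf T V₁ V₂ T₁)
    (hT₁d : Dense (T₁.domain : Set V₁))
    (T₂ : ↥V₂ →ₗ.[ℂ] ↥V₃) (hT₂ : IsRestrictionOf T V₂ V₃ T₂)
    (hT₂d : Dense (T₂.domain : Set V₂))
    (hR₁ : IsClosed ((LinearMap.range T₁.toFun : Submodule ℂ V₂) : Set V₂))
    (hR₂ : IsClosed ((LinearMap.range T₂.toFun : Submodule ℂ V₃) : Set V₃))
    -- `S₂ = T*|_{V₂} : V₂ ⇀ V₁` and `S₃ = T*|_{V₃} : V₃ ⇀ V₂`; the adjoint of `T|_{V₁}` is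
    -- `T*|_{V₂}` and the adjoint of `T|_{V₂}` is `T*|_{V₃}`
    (S₂ : ↥V₂ →ₗ.[ℂ] ↥V₁) (hS₂ : IsRestrictionOf (T†) V₂ V₁ S₂)
    (S₃ : ↥V₃ →ₗ.[ℂ] ↥V₂) (hS₃ : IsRestrictionOf (T†) V₃ V₂ S₃)
    (hadj₁ : T₁† = S₂) (hadj₂ : T₂† = S₃)
    -- `Q = P|_{V₂}`
    (Q : ↥V₂ →ₗ.[ℂ] ↥V₂) (hQ : IsRestrictionOf P V₂ V₂ Q)
    :
    ∃ c : ℝ, 0 < c ∧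
      -- (a) `c‖u‖² ≤ ‖Tu‖² + ‖T*u‖²` for `u ∈ Dom T ∩ Dom T* ∩ R(Q)`
      (∀ (u : V₂) (h1 : (u : H) ∈ T.domain) (h2 : (u : H) ∈ (T†).domain),
        u ∈ LinearMap.range Q.toFun →
          c * ‖(u : H)‖ ^ 2 ≤ ‖T ⟨(u : H), h1⟩‖ ^ 2 + ‖T† ⟨(u : H), h2⟩‖ ^ 2) ∧
      -- (b) `c‖u‖ ≤ ‖Qu‖` for `u ∈ Dom Q ∩ R(Q)`
      (∀ (u : V₂) (hu : u ∈ Q.domain), u ∈ LinearMap.range Q.toFun →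
        c * ‖u‖ ≤ ‖Q ⟨u, hu⟩‖) :=
  stmt_7_general hTc (fun u ↦ ⟨hTr u, hT2 u⟩) (T.adjoint_isFormalAdjoint hTd).symm
    ⟨hPdom, hPval⟩ hT₁ hT₂ hR₁ hR₂ hS₂ hS₃ hQ
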